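/- arXiv:1209.1329 — 2 statements merged into one kernel-verified Lean document; each statement's English description precedes it below -/
import Mathlib

section
/- For all integers n, m ≥ 0, every real number a with 0 ≤ a ≤ 1, and every integer k with 0 ≤ k ≤ n+m, the linearization coefficient with a₁ = a and a₂ = 1−a is nonnegative: β_k^{(n,m)}(a, 1−a) ≥ 0. -/
open Finset

/-- The Bessel polynomial `q_n(u) = ∑_{k=0}^n (n!(2n−k)! 2^k)/((2n)!(n−k)! k!) u^k`. -/
noncomputable def besselQ (n : ℕ) (u : ℝ) : ℝ :=
  ∑ k ∈ Finset.range (n + 1),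
    ((n.factorial : ℝ) * (2 * n - k).factorial * 2 ^ k) /
      ((2 * n).factorial * (n - k).factorial * k.factorial) * u ^ k

/-!
Let `D` be differentiation and `C` the cone of nonnegative combinations of the `q_n`. Since
`(1 - D) q_0 = 1` and `(2n + 1) (1 - D) q_{n+1} = X q_n`, the injective operator `1 - D` maps
`C` onto `ℝ≥0 + X C`. Moreover `C ⊆ ℝ≥0 + X C`: if `q_n = (1 - D) g` and `g = (1 - D) h`, then
`(2n + 1) q_{n+1} = X g + h`. For `P = q_n(aX) q_m(bX)` the product rule gives
`(1 - D) P = (1 - a - b) P + a ((1 - D) q_n)(aX) q_m(bX) + b q_n(aX) ((1 - D) q_m)(bX)`.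
Writing `q_n = c + X g` with `c ≥ 0` and `g ∈ C` in the first term, every term on the right lies
in `ℝ≥0 + X C` by induction on `n` and `m`, whence `P ∈ C`.
-/

open Polynomial

section Dilate

variable {R : Type*} [CommSemiring R]

/-- The substitution `f ↦ f(aX)`, as an algebra endomorphism. -/
noncomputable def dilate (a : R) : R[X] →ₐ[R] R[X] := aeval (C a * X)

lemma dilate_X (a : R) : dilate a X = C a * X := aeval_X _

lemma eval_dilate (a u : R) (f : R[X]) : (dilate a f).eval u = f.eval (a * u) := by
  simp [dilate, ← comp_eq_aeval, eval_comp]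

lemma derivative_dilate (a : R) (f : R[X]) :
    derivative (dilate a f) = C a * dilate a (derivative f) := by
  simp [dilate, ← comp_eq_aeval, derivative_comp]

end Dilate

section SubDerivative

variable {R : Type*} [CommRing R]

/-- The operator `1 - D` on polynomials, where `D` is differentiation. -/
noncomputable def subDerivative : R[X] →ₗ[R] R[X] := LinearMap.id - derivative

lemma subDerivative_apply (f : R[X]) : subDerivative f = f - derivative f := rfl

lemma subDerivative_one : subDerivative (1 : R[X]) = 1 := by
  simp [subDerivative_apply]

lemma subDerivative_X_mul (f : R[X]) : subDerivative (X * f) = X * subDerivative f - f := by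
  simp only [subDerivative_apply, derivative_mul, derivative_X]
  ring

lemma subDerivative_injective : Function.Injective (subDerivative : R[X] →ₗ[R] R[X]) := by
  refine (injective_iff_map_eq_zero _).2 fun f hf => ?_
  by_contra hne
  have hlt : (derivative f).degree < f.degree := degree_derivative_lt hne
  exact hlt.ne (congrArg degree (sub_eq_zero.1 hf).symm)

lemma subDerivative_dilate_mul_dilate (a b : R) (f g : R[X]) :
    subDerivative (dilate a f * dilate b g) =
      (1 - a - b) • (dilate a f * dilate b g) + a • (dilate a (subDerivative f) * dilate b g) +
        b • (dilate a f * dilate b (subDerivative g)) := by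
  simp only [subDerivative_apply, derivative_mul, derivative_dilate, map_sub, smul_eq_C_mul, C_1]
  ring

lemma subDerivative_dilate (a : R) (f : R[X]) :
    subDerivative (dilate a f) = (1 - a) • dilate a f + a • dilate a (subDerivative f) := by
  simpa using subDerivative_dilate_mul_dilate a 0 f 1

end SubDerivative

lemma cast_descFactorial_ne_zero {n k : ℕ} (h : k ≤ n) : (n.descFactorial k : ℝ) ≠ 0 :=
  Nat.cast_ne_zero.2 (mt Nat.descFactorial_eq_zero_iff_lt.1 h.not_gt)

/-- The Bessel polynomial `q_n` as an element of `ℝ[X]`. Falling factorials, rather than the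
factorials of `besselQ`, make the coefficient formula valid at every index
(`coeff_besselPoly`). -/
noncomputable def besselPoly (n : ℕ) : ℝ[X] :=
  ∑ k ∈ Finset.range (n + 1),
    monomial k (2 ^ k * n.descFactorial k / ((2 * n).descFactorial k * k.factorial) : ℝ)

lemma eval_besselPoly (n : ℕ) (u : ℝ) : (besselPoly n).eval u = besselQ n u := by
  simp only [besselPoly, besselQ, eval_finsetSum, eval_monomial]
  refine Finset.sum_congr rfl fun k hk => ?_
  have hkn : k ≤ n := Finset.mem_range_succ_iff.1 hk
  have hd : ((2 * n).descFactorial k : ℝ) ≠ 0 := cast_descFactorial_ne_zero (by lia)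
  rw [← Nat.factorial_mul_descFactorial hkn,
    ← Nat.factorial_mul_descFactorial (show k ≤ 2 * n by lia)]
  push_cast
  field_simp

lemma coeff_besselPoly (n k : ℕ) : (besselPoly n).coeff k =
    2 ^ k * n.descFactorial k / ((2 * n).descFactorial k * k.factorial) := by
  simp only [besselPoly, finsetSum_coeff, coeff_monomial, Finset.sum_ite_eq', Finset.mem_range]
  split_ifs with hk
  · rfl
  · simp [Nat.descFactorial_eq_zero_iff_lt.2 (show n < k by lia)]

lemma coeff_besselPoly_of_lt {n k : ℕ} (h : n < k) : (besselPoly n).coeff k = 0 := by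
  simp [coeff_besselPoly, Nat.descFactorial_eq_zero_iff_lt.2 h]

lemma coeff_besselPoly_succ_right (n k : ℕ) :
    (k + 1) * (2 * n - k) * (besselPoly n).coeff (k + 1) =
      2 * (n - k) * (besselPoly n).coeff k := by
  rcases lt_trichotomy k n with hk | rfl | hk
  · have hd : ((2 * n).descFactorial k : ℝ) ≠ 0 := cast_descFactorial_ne_zero (by lia)
    have hnk : (2 * n - k : ℝ) ≠ 0 := by
      rw [← Nat.cast_ofNat, ← Nat.cast_mul, ← Nat.cast_sub (by lia)]
      exact_mod_cast (by lia : 2 * n - k ≠ 0)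
    simp only [coeff_besselPoly, Nat.descFactorial_succ, Nat.factorial_succ, Nat.cast_mul,
      Nat.cast_sub hk.le, Nat.cast_sub (show k ≤ 2 * n by lia), Nat.cast_ofNat, Nat.cast_succ]
    field_simp
    ring
  · simp [coeff_besselPoly_of_lt]
  · simp [coeff_besselPoly_of_lt, hk, hk.trans (Nat.lt_succ_self k)]

lemma coeff_besselPoly_succ_succ (n k : ℕ) :
    (2 * n + 1) * (k + 1) * (besselPoly (n + 1)).coeff (k + 1) =
      (2 * n + 1 - k) * (besselPoly n).coeff k := by
  rcases le_or_gt k n with hk | hk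
  · have hd : ((2 * n).descFactorial k : ℝ) ≠ 0 := cast_descFactorial_ne_zero (by lia)
    have hd' : ((2 * n + 1).descFactorial k : ℝ) ≠ 0 := cast_descFactorial_ne_zero (by lia)
    have hsucc : (2 * n + 1 - k : ℝ) * (2 * n + 1).descFactorial k =
        (2 * n + 1) * (2 * n).descFactorial k := by
      have h := Nat.succ_descFactorial (2 * n) k
      rify [show k ≤ 2 * n + 1 by lia] at h
      exact h
    simp only [coeff_besselPoly, Nat.mul_succ, Nat.succ_descFactorial_succ, Nat.factorial_succ]
    push_cast
    field_simp
    linear_combination (-2 ^ (k + 1) * (n + 1) * (n.descFactorial k : ℝ)) * hsucc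
  · simp [coeff_besselPoly_of_lt, hk]

lemma besselPoly_zero : besselPoly 0 = 1 := by
  simp [besselPoly]

lemma subDerivative_besselPoly_succ (n : ℕ) :
    (2 * n + 1 : ℝ) • subDerivative (besselPoly (n + 1)) = X * besselPoly n := by
  ext k
  have hright := coeff_besselPoly_succ_right (n + 1) k
  simp only [coeff_smul, subDerivative_apply, coeff_sub, coeff_derivative, smul_eq_mul]
  rcases k with _ | k
  · rw [coeff_X_mul_zero]
    have hne : (2 * (n + 1) : ℝ) ≠ 0 := by positivity
    refine mul_left_cancel₀ hne ?_
    push_cast at hright ⊢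
    linear_combination -(2 * n + 1) * hright
  · rw [coeff_X_mul]
    rcases le_or_gt k n with hk | hk
    · have hne : (2 * n + 1 - k : ℝ) ≠ 0 := by
        rify at hk
        linarith
      refine mul_left_cancel₀ hne ?_
      have hsucc := coeff_besselPoly_succ_succ n k
      push_cast at hright ⊢
      linear_combination hsucc - (2 * n + 1) * hright
    · simp [coeff_besselPoly_of_lt, hk, show n + 1 < k + 1 + 1 by lia]

lemma subDerivative_besselPoly_succ_eq_smul (n : ℕ) :
    subDerivative (besselPoly (n + 1)) = (2 * n + 1 : ℝ)⁻¹ • (X * besselPoly n) := by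
  rw [← subDerivative_besselPoly_succ, inv_smul_smul₀ (by positivity)]

lemma degree_besselPoly (n : ℕ) : (besselPoly n).degree = n := by
  refine degree_eq_of_le_of_coeff_ne_zero
    ((degree_le_iff_coeff_zero _ _).2 fun _ h => coeff_besselPoly_of_lt (by exact_mod_cast h)) ?_
  have hd : ((2 * n).descFactorial n : ℝ) ≠ 0 := cast_descFactorial_ne_zero (by lia)
  rw [coeff_besselPoly, Nat.descFactorial_self]
  positivity

/-- The Bessel polynomials as a basis of `ℝ[X]`, through which linearization coefficients are
coordinates. -/
noncomputable def besselBasis : Module.Basis ℕ ℝ ℝ[X] :=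
  Polynomial.Sequence.basis ⟨besselPoly, degree_besselPoly⟩ fun i =>
    (leadingCoeff_ne_zero.2 (Polynomial.Sequence.ne_zero _ i)).isUnit

lemma besselBasis_apply (n : ℕ) : besselBasis n = besselPoly n :=
  Polynomial.Sequence.basis_eq_self _ _ n

/-- The cone of nonnegative combinations of `q_0, …, q_n`. -/
noncomputable def besselCone (n : ℕ) : PointedCone ℝ ℝ[X] :=
  PointedCone.hull ℝ (besselPoly '' Set.Iic n)

/-- The cone `ℝ≥0 + X · besselCone n`; it is the image of `besselCone (n + 1)` under `1 - D`
(`map_subDerivative_besselCone_succ`). -/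
noncomputable def besselShiftCone (n : ℕ) : PointedCone ℝ ℝ[X] :=
  PointedCone.hull ℝ {1} ⊔ (besselCone n).map (LinearMap.mulLeft ℝ X)

lemma besselCone_le_iff {n : ℕ} {K : PointedCone ℝ ℝ[X]} :
    besselCone n ≤ K ↔ ∀ i ≤ n, besselPoly i ∈ K := by
  simp only [besselCone, PointedCone.hull, Submodule.span_le, Set.subset_def, Set.forall_mem_image,
    Set.mem_Iic, SetLike.mem_coe]

lemma besselPoly_mem_besselCone {i n : ℕ} (h : i ≤ n) : besselPoly i ∈ besselCone n :=
  besselCone_le_iff.1 le_rfl i h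

lemma besselCone_zero_le_iff {K : PointedCone ℝ ℝ[X]} : besselCone 0 ≤ K ↔ 1 ∈ K := by
  simp [besselCone_le_iff, besselPoly_zero]

lemma besselCone_succ_le_iff {n : ℕ} {K : PointedCone ℝ ℝ[X]} :
    besselCone (n + 1) ≤ K ↔ besselCone n ≤ K ∧ besselPoly (n + 1) ∈ K := by
  simp only [besselCone_le_iff, Nat.le_succ_iff, or_imp, forall_and, forall_eq]

lemma besselCone_mono : Monotone besselCone := fun _ _ h =>
  Submodule.span_mono (Set.image_mono (Set.Iic_subset_Iic.2 h))

lemma one_mem_besselShiftCone (n : ℕ) : 1 ∈ besselShiftCone n :=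
  Submodule.mem_sup_left (Submodule.mem_span_singleton_self 1)

lemma X_mul_mem_besselShiftCone {n : ℕ} {f : ℝ[X]} (hf : f ∈ besselCone n) :
    X * f ∈ besselShiftCone n :=
  Submodule.mem_sup_right (PointedCone.mem_map.2 ⟨f, hf, rfl⟩)

lemma exists_of_mem_besselShiftCone {n : ℕ} {f : ℝ[X]} (hf : f ∈ besselShiftCone n) :
    ∃ c : ℝ, 0 ≤ c ∧ ∃ g ∈ besselCone n, f = c • 1 + X * g := by
  obtain ⟨_, hc, _, hXg, rfl⟩ := Submodule.mem_sup.1 hf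
  obtain ⟨c, rfl⟩ := Submodule.mem_span_singleton.1 hc
  obtain ⟨g, hg, rfl⟩ := PointedCone.mem_map.1 hXg
  exact ⟨c, c.2, g, hg, rfl⟩

lemma subDerivative_mem_besselShiftCone {n : ℕ} {f : ℝ[X]} (hf : f ∈ besselCone (n + 1)) :
    subDerivative f ∈ besselShiftCone n := by
  suffices h : besselCone (n + 1) ≤ (besselShiftCone n).comap subDerivative from h hf
  refine besselCone_le_iff.2 fun i hi => ?_
  rw [PointedCone.mem_comap]
  rcases i with _ | i
  · rw [besselPoly_zero, subDerivative_one]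
    exact one_mem_besselShiftCone n
  · rw [subDerivative_besselPoly_succ_eq_smul]
    exact PointedCone.smul_mem _ (by positivity)
      (X_mul_mem_besselShiftCone (besselPoly_mem_besselCone (by lia)))

lemma one_mem_map_subDerivative_besselCone (n : ℕ) : 1 ∈ (besselCone n).map subDerivative :=
  PointedCone.mem_map.2
    ⟨1, besselPoly_zero ▸ besselPoly_mem_besselCone n.zero_le, subDerivative_one⟩

lemma X_mul_mem_map_subDerivative_besselCone {n : ℕ} {f : ℝ[X]} (hf : f ∈ besselCone n) :
    X * f ∈ (besselCone (n + 1)).map subDerivative := by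
  suffices h : besselCone n ≤
      ((besselCone (n + 1)).map subDerivative).comap (LinearMap.mulLeft ℝ X) from h hf
  refine besselCone_le_iff.2 fun i hi => ?_
  rw [PointedCone.mem_comap, LinearMap.mulLeft_apply, ← subDerivative_besselPoly_succ, ← map_smul]
  exact PointedCone.mem_map.2 ⟨_, PointedCone.smul_mem _ (by positivity)
    (besselPoly_mem_besselCone (by lia)), rfl⟩

lemma map_subDerivative_besselCone_succ (n : ℕ) :
    (besselCone (n + 1)).map subDerivative = besselShiftCone n := by
  refine le_antisymm ?_ fun f hf => ?_
  · rintro _ ⟨f, hf, rfl⟩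
    exact subDerivative_mem_besselShiftCone hf
  · obtain ⟨c, hc, g, hg, rfl⟩ := exists_of_mem_besselShiftCone hf
    exact add_mem (PointedCone.smul_mem _ hc (one_mem_map_subDerivative_besselCone _))
      (X_mul_mem_map_subDerivative_besselCone hg)

lemma mem_besselCone_succ_of_subDerivative_mem {n : ℕ} {f : ℝ[X]}
    (hf : subDerivative f ∈ besselShiftCone n) : f ∈ besselCone (n + 1) := by
  rw [← map_subDerivative_besselCone_succ] at hf
  obtain ⟨g, hg, hgf⟩ := PointedCone.mem_map.1 hf
  rwa [← subDerivative_injective hgf]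

lemma besselCone_le_map_subDerivative (n : ℕ) :
    besselCone n ≤ (besselCone n).map subDerivative := by
  induction n with
  | zero => exact besselCone_zero_le_iff.2 (one_mem_map_subDerivative_besselCone 0)
  | succ n ih =>
    have hmono := ih.trans (Submodule.map_mono (besselCone_mono n.le_succ))
    refine besselCone_succ_le_iff.2 ⟨hmono, ?_⟩
    obtain ⟨g, hg, hgq⟩ := PointedCone.mem_map.1 (ih (besselPoly_mem_besselCone le_rfl))
    obtain ⟨h, hh, hhg⟩ := PointedCone.mem_map.1 (ih hg)
    have key : (2 * n + 1 : ℝ) • besselPoly (n + 1) = X * g + h := by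
      apply subDerivative_injective
      rw [map_smul, subDerivative_besselPoly_succ, map_add, subDerivative_X_mul, hgq, hhg]
      ring
    rw [← PointedCone.smul_mem_iff _ (show (0 : ℝ) < 2 * n + 1 by positivity), key]
    exact add_mem (X_mul_mem_map_subDerivative_besselCone hg) (hmono hh)

lemma besselCone_succ_le_besselShiftCone (n : ℕ) : besselCone (n + 1) ≤ besselShiftCone n :=
  (besselCone_le_map_subDerivative (n + 1)).trans_eq (map_subDerivative_besselCone_succ n)

lemma exists_besselPoly_succ_eq (n : ℕ) : ∃ c : ℝ, 0 ≤ c ∧ ∃ g ∈ besselCone n,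
    besselPoly (n + 1) = c • 1 + X * g :=
  exists_of_mem_besselShiftCone
    (besselCone_succ_le_besselShiftCone n (besselPoly_mem_besselCone le_rfl))

lemma dilate_mem_besselCone {a : ℝ} (ha0 : 0 ≤ a) (ha1 : a ≤ 1) {n : ℕ} {f : ℝ[X]}
    (hf : f ∈ besselCone n) : dilate a f ∈ besselCone n := by
  suffices h : besselCone n ≤ (besselCone n).comap (dilate a).toLinearMap from h hf
  clear hf
  induction n with
  | zero =>
    refine besselCone_zero_le_iff.2 ?_
    rw [PointedCone.mem_comap, AlgHom.toLinearMap_apply, map_one, ← besselPoly_zero]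
    exact besselPoly_mem_besselCone le_rfl
  | succ n ih =>
    refine besselCone_succ_le_iff.2 ⟨fun f hf => besselCone_mono n.le_succ (ih hf), ?_⟩
    obtain ⟨c, hc, g, hg, hq⟩ := exists_besselPoly_succ_eq n
    have key : subDerivative (dilate a (besselPoly (n + 1))) =
        ((1 - a) * c) • 1 + X * (((1 - a) * a) • dilate a g +
          (a ^ 2 * (2 * n + 1 : ℝ)⁻¹) • dilate a (besselPoly n)) := by
      rw [subDerivative_dilate, subDerivative_besselPoly_succ_eq_smul, hq]
      simp only [map_add, map_smul, map_mul, map_one, dilate_X]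
      simp only [smul_eq_C_mul, C_mul, C_pow]
      ring
    have : 0 ≤ 1 - a := sub_nonneg.2 ha1
    refine mem_besselCone_succ_of_subDerivative_mem ?_
    rw [LinearMap.coe_restrictScalars, AlgHom.toLinearMap_apply, key]
    exact add_mem (PointedCone.smul_mem _ (by positivity) (one_mem_besselShiftCone n))
      (X_mul_mem_besselShiftCone (add_mem (PointedCone.smul_mem _ (by positivity) (ih hg))
        (PointedCone.smul_mem _ (by positivity) (ih (besselPoly_mem_besselCone le_rfl)))))

lemma dilate_mul_dilate_succ_mem_besselCone {a b : ℝ} (ha : 0 ≤ a) (hb : 0 ≤ b) (hab : a + b ≤ 1)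
    {n m : ℕ}
    (hn : ∀ f ∈ besselCone n, dilate a f * dilate b (besselPoly (m + 1)) ∈ besselCone (n + m + 1))
    (hm : dilate a (besselPoly (n + 1)) * dilate b (besselPoly m) ∈ besselCone (n + m + 1)) :
    dilate a (besselPoly (n + 1)) * dilate b (besselPoly (m + 1)) ∈ besselCone (n + m + 2) := by
  obtain ⟨c, hc, g, hg, hq⟩ := exists_besselPoly_succ_eq n
  have key : subDerivative (dilate a (besselPoly (n + 1)) * dilate b (besselPoly (m + 1))) =
      ((1 - a - b) * c) • dilate b (besselPoly (m + 1)) +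
        X * (((1 - a - b) * a) • (dilate a g * dilate b (besselPoly (m + 1))) +
          (a ^ 2 * (2 * n + 1 : ℝ)⁻¹) • (dilate a (besselPoly n) * dilate b (besselPoly (m + 1))) +
          (b ^ 2 * (2 * m + 1 : ℝ)⁻¹) •
            (dilate a (besselPoly (n + 1)) * dilate b (besselPoly m))) := by
    rw [subDerivative_dilate_mul_dilate, subDerivative_besselPoly_succ_eq_smul,
      subDerivative_besselPoly_succ_eq_smul, hq]
    simp only [map_add, map_smul, map_mul, map_one, dilate_X]
    simp only [smul_eq_C_mul, C_mul, C_pow]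
    ring
  have : 0 ≤ 1 - a - b := by linarith
  have hdilate : dilate b (besselPoly (m + 1)) ∈ besselShiftCone (n + m + 1) :=
    besselCone_succ_le_besselShiftCone _ (besselCone_mono (by lia)
      (dilate_mem_besselCone hb (by linarith) (besselPoly_mem_besselCone le_rfl)))
  refine mem_besselCone_succ_of_subDerivative_mem ?_
  rw [key]
  exact add_mem (PointedCone.smul_mem _ (by positivity) hdilate)
    (X_mul_mem_besselShiftCone (add_mem (add_mem
      (PointedCone.smul_mem _ (by positivity) (hn g hg))
      (PointedCone.smul_mem _ (by positivity) (hn _ (besselPoly_mem_besselCone le_rfl))))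
      (PointedCone.smul_mem _ (by positivity) hm)))

lemma dilate_mul_dilate_besselPoly_mem_besselCone {a b : ℝ} (ha : 0 ≤ a) (hb : 0 ≤ b)
    (hab : a + b ≤ 1) {n : ℕ} {f : ℝ[X]} (hf : f ∈ besselCone n) (m : ℕ) :
    dilate a f * dilate b (besselPoly m) ∈ besselCone (n + m) := by
  induction m generalizing n f with
  | zero =>
    simpa [besselPoly_zero] using dilate_mem_besselCone ha (by linarith) hf
  | succ m ihm =>
    suffices h : besselCone n ≤ (besselCone (n + (m + 1))).comap
        (LinearMap.mulRight ℝ (dilate b (besselPoly (m + 1))) ∘ₗ (dilate a).toLinearMap) from h hf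
    clear hf
    induction n with
    | zero =>
      have hq := dilate_mem_besselCone hb (by linarith)
        (besselPoly_mem_besselCone (le_refl (m + 1)))
      exact besselCone_zero_le_iff.2 (by simpa using hq)
    | succ n ihn =>
      refine besselCone_succ_le_iff.2 ⟨fun f hf => besselCone_mono (by lia) (ihn hf), ?_⟩
      have hm := ihm (besselPoly_mem_besselCone (le_refl (n + 1)))
      rw [Nat.add_right_comm] at hm
      have hstep := dilate_mul_dilate_succ_mem_besselCone ha hb hab (fun f hf => ihn hf) hm
      exact besselCone_mono (by lia) hstep

lemma besselBasis_repr_nonneg {n : ℕ} {f : ℝ[X]} (hf : f ∈ besselCone n) (k : ℕ) :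
    0 ≤ besselBasis.repr f k := by
  suffices h : besselCone n ≤ (PointedCone.positive ℝ ℝ).comap (besselBasis.coord k) from h hf
  refine besselCone_le_iff.2 fun i _ => ?_
  rw [PointedCone.mem_comap, PointedCone.mem_positive, ← besselBasis_apply,
    Module.Basis.coord_apply, Module.Basis.repr_self]
  exact Finsupp.single_nonneg.2 zero_le_one k

lemma besselBasis_repr_sum_smul {s : Finset ℕ} {k : ℕ} (hk : k ∈ s) (c : ℕ → ℝ) :
    besselBasis.repr (∑ i ∈ s, c i • besselPoly i) k = c k := by
  simp [← besselBasis_apply, Finsupp.single_apply, hk]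

theorem linearization_nonneg_general {a b : ℝ} (ha : 0 ≤ a) (hb : 0 ≤ b) (hab : a + b ≤ 1)
    {n m : ℕ} {β : ℕ → ℝ}
    (hβ : ∀ u : ℝ, besselQ n (a * u) * besselQ m (b * u) =
      ∑ k ∈ Finset.range (n + m + 1), β k * besselQ k u)
    {k : ℕ} (hk : k ≤ n + m) : 0 ≤ β k := by
  have hsum : dilate a (besselPoly n) * dilate b (besselPoly m) =
      ∑ i ∈ Finset.range (n + m + 1), β i • besselPoly i :=
    Polynomial.funext fun u => by
      simp [eval_dilate, eval_finsetSum, eval_besselPoly, hβ]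
  have hmem := dilate_mul_dilate_besselPoly_mem_besselCone ha hb hab
    (besselPoly_mem_besselCone (le_refl n)) m
  rw [← besselBasis_repr_sum_smul (Finset.mem_range_succ_iff.2 hk) β, ← hsum]
  exact besselBasis_repr_nonneg hmem k

/-- Positivity of the linearization coefficients with `a₁ = a`, `a₂ = 1−a` and `0 ≤ a ≤ 1`:
`β_k^{(n,m)}(a, 1−a) ≥ 0` for `0 ≤ k ≤ n+m`. -/
theorem linearization_nonneg (a : ℝ) (ha0 : 0 ≤ a) (ha1 : a ≤ 1) (β : ℕ → ℕ → ℕ → ℝ)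
    (hβ : ∀ n m : ℕ, ∀ u : ℝ, besselQ n (a * u) * besselQ m ((1 - a) * u) =
      ∑ k ∈ Finset.range (n + m + 1), β n m k * besselQ k u)
    (n m k : ℕ) (hk : k ≤ n + m) :
    0 ≤ β n m k := by
  exact linearization_nonneg_general ha0 (sub_nonneg.2 ha1) (by linarith) (hβ n m) hk
end

section
/- Let n, m ≥ 0 be integers, let k be an integer with 2k ≥ n+m−1 and k ≤ n+m, and let a be a real number with a ≠ 0 and a ≠ 1. Then a^{2n+2m−2k} · (1−a)^{k−m−n} · ((n+m+1)!/(2k+1−n−m)!) · Σ_{s=0}^{2(n+m−k)} ((k−m+1)_s (2k−2n−2m)_s)/((2k−n−m+2)_s · s!) · a^{−s} = Σ_{i=0}^{m+n−k} a^{i} · C(m+n−k, i) · (−m+k+i+1)_{2(m+n−k−i)} · (1−a)^{−i} · Σ_{ℓ=0}^{i} ((k+2)_ℓ (−k−1)_ℓ (−i)_ℓ)/((−m−i)_ℓ · ℓ!) · (m−i+1+ℓ)_{2i−ℓ} · (1−a)^{ℓ}, where C(p, q) denotes the binomial coefficient. (The left-hand side is a terminating ₂F₁(−m+k+1, −2n−2m+2k;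 −n−m+2k+2; 1/a) and the inner sum on the right is the regularized terminating series (m−i+1)_{2i} · ₃F₂(k+2, −k−1, −i; −m−i, m−i+1; 1−a).) -/
open Finset

/-- The Pochhammer symbol `(z)_k = z(z+1)⋯(z+k−1)` for a real `z`. -/
def poch (z : ℝ) (k : ℕ) : ℝ := ∏ i ∈ Finset.range k, (z + (i : ℝ))

/-!
Write `y_x(c)` for the formal series `∑ (x-p+1)_{2p} (cX)^p / p!` and put `N = n + m - k`,
`b = 1 - a`. Up to elementary factors, the right-hand side is the coefficient of `X^N` in
`y_{k+1}(-ab) y_m(a) y_n(b)`, and the left-hand side is the coefficient of `X^{2N}` in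
`(1+X)^{N-1-n} (1+aX)^{n+m+1}`. With `N` fixed, both coefficients are polynomials in `n` and `m`,
both satisfy `F(n, m) = a F(n-1, m) + b F(n, m-1)`, and they agree at `n = -1`, where `y_n(b) = 1`.
By the recurrence, agreement at `n - 1` makes the difference at `n` a polynomial in `m` that is
multiplied by `b ≠ 1` under a unit shift, hence zero; so they agree at every integer `n ≥ -1`, and
being polynomials, everywhere.
-/

section Pochhammer

theorem poch_eq_eval_ascPochhammer (z : ℝ) (k : ℕ) : poch z k = (ascPochhammer ℝ k).eval z := by
  induction k with
  | zero => simp [poch]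
  | succ k ih => rw [ascPochhammer_succ_eval, ← ih, poch, prod_range_succ, ← poch]

theorem poch_zero (z : ℝ) : poch z 0 = 1 := prod_range_zero _

theorem poch_succ (z : ℝ) (k : ℕ) : poch z (k + 1) = poch z k * (z + k) := prod_range_succ _ k

theorem poch_add (z : ℝ) (j k : ℕ) : poch z (j + k) = poch z j * poch (z + j) k := by
  simp only [poch, prod_range_add, Nat.cast_add, add_assoc]

theorem poch_succ_left (z : ℝ) (k : ℕ) : poch z (k + 1) = z * poch (z + 1) k := by
  simpa [poch, add_comm] using poch_add z 1 k

theorem poch_neg (z : ℝ) (k : ℕ) : poch (-z) k = (-1) ^ k * poch (z - k + 1) k := by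
  simp only [poch_eq_eval_ascPochhammer, ascPochhammer_eval_neg_eq_descPochhammer,
    descPochhammer_eval_eq_ascPochhammer]

theorem poch_pos {z : ℝ} (hz : 0 < z) (k : ℕ) : 0 < poch z k :=
  prod_pos fun _ _ => by positivity

theorem poch_ne_zero_of_le {z : ℝ} {j k : ℕ} (hjk : j ≤ k) (h : poch z k ≠ 0) : poch z j ≠ 0 := by
  obtain ⟨l, rfl⟩ := Nat.exists_eq_add_of_le hjk
  rw [poch_add] at h
  exact left_ne_zero_of_mul h

theorem poch_natCast_add_one (j k : ℕ) :
    poch ((j : ℝ) + 1) k = ((j + k).factorial : ℝ) / (j.factorial : ℝ) := by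
  induction k with
  | zero => rw [poch_zero, add_zero, div_self (by positivity)]
  | succ k ih =>
    rw [poch_succ, ih, ← add_assoc, Nat.factorial_succ]
    push_cast
    ring

theorem poch_neg_natCast_add (s t : ℕ) :
    poch (-((s + t : ℕ) : ℝ)) s = (-1) ^ s * (((s + t).factorial : ℝ) / (t.factorial : ℝ)) := by
  rw [poch_neg, Nat.cast_add, add_sub_cancel_left, poch_natCast_add_one, add_comm t]

theorem ringChoose_eq_poch_div_factorial (x : ℝ) (k : ℕ) :
    Ring.choose x k = poch (x - k + 1) k / (k.factorial : ℝ) := by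
  rw [Ring.choose_eq_smul, Polynomial.descPochhammer_smeval_eq_ascPochhammer,
    Polynomial.ascPochhammer_smeval_eq_eval, poch_eq_eval_ascPochhammer, smul_eq_mul,
    div_eq_inv_mul]

/-- The central Pochhammer product `(x-p+1)_{2p} = ∏_{q < p} (x-q)(x+q+1)`, whose `2p` factors
are symmetric about `x + 1/2`. -/
def centralPoch (x : ℝ) (p : ℕ) : ℝ := poch (x - p + 1) (2 * p)

theorem centralPoch_zero (x : ℝ) : centralPoch x 0 = 1 := poch_zero _

theorem centralPoch_succ (x : ℝ) (p : ℕ) :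
    centralPoch x (p + 1) = (x - p) * (x + p + 1) * centralPoch x p := by
  rw [centralPoch, centralPoch, show 2 * (p + 1) = 2 * p + 1 + 1 by ring, poch_succ,
    poch_succ_left]
  push_cast
  rw [show x - ((p : ℝ) + 1) + 1 + 1 = x - p + 1 by ring]
  ring

theorem centralPoch_zero_succ (p : ℕ) : centralPoch 0 (p + 1) = 0 := by
  induction p with
  | zero => simp [centralPoch_succ]
  | succ p ih => rw [centralPoch_succ, ih, mul_zero]

theorem centralPoch_reflect (x : ℝ) (p : ℕ) : centralPoch (-1 - x) p = centralPoch x p := by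
  induction p with
  | zero => simp only [centralPoch_zero]
  | succ p ih =>
    rw [centralPoch_succ, centralPoch_succ, ih]
    ring

theorem add_mul_centralPoch_sub_one (x : ℝ) (p : ℕ) :
    (x + p) * centralPoch (x - 1) p = (x - p) * centralPoch x p := by
  have h := poch_succ (x - p) (2 * p)
  rw [poch_succ_left] at h
  push_cast at h
  rw [centralPoch, centralPoch, show x - 1 - p + 1 = x - p by ring, h]
  ring

theorem centralPoch_succ_sub (x : ℝ) (p : ℕ) :
    centralPoch x (p + 1) - centralPoch (x - 1) (p + 1) =
      2 * (p + 1) * (x - p) * centralPoch x p := by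
  rw [centralPoch_succ, centralPoch_succ]
  linear_combination (-(x - 1 - p)) * add_mul_centralPoch_sub_one x p

theorem poch_mul_poch_neg (x : ℝ) (l : ℕ) :
    poch (x + 1) l * poch (-x) l = (-1) ^ l * centralPoch x l := by
  rw [poch_neg, centralPoch, two_mul, poch_add, show x - l + 1 + l = x + 1 by ring]
  ring

theorem poch_central_add (x : ℝ) (q l : ℕ) :
    poch (x - q + 1) (2 * q + l) = centralPoch x q * poch (x + 1 + q) l := by
  rw [poch_add, centralPoch]
  push_cast
  ring_nf

theorem centralPoch_mul_centralPoch (x : ℝ) (q l : ℕ) :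
    centralPoch x q * centralPoch (x - (q + l : ℕ)) l =
      poch (x + q - (2 * (q + l) : ℕ) + 1) (2 * (q + l)) := by
  rw [show 2 * (q + l) = 2 * l + 2 * q by ring, poch_add, centralPoch, centralPoch, mul_comm]
  push_cast
  ring_nf

end Pochhammer

section PowerSeries

open PowerSeries

theorem coeff_mul_eq_sum_range {R : Type*} [Semiring R] (f g : R⟦X⟧) (n : ℕ) :
    coeff n (f * g) = ∑ i ∈ range (n + 1), coeff i f * coeff (n - i) g := by
  rw [coeff_mul, Nat.sum_antidiagonal_eq_sum_range_succ_mk]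

theorem coeff_X_sq_mul_derivative {R : Type*} [CommRing R] (f : R⟦X⟧) (n : ℕ) :
    coeff n (X ^ 2 * d⁄dX R f) = ((n : R) - 1) * coeff n (X * f) := by
  rcases n with _ | _ | n
  · simp
  · simp [pow_two, mul_assoc]
  · rw [pow_two, mul_assoc, coeff_succ_X_mul, coeff_succ_X_mul, coeff_succ_X_mul,
      coeff_derivative]
    push_cast
    ring

theorem coeff_mul_C_add_X_pow {R : Type*} [CommRing R] (a : R) (f : R⟦X⟧) (N : ℕ) :
    coeff (2 * N) (f * (C a * (C a + X)) ^ N) = coeff (2 * N) (rescale a f * (1 + X) ^ N) := by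
  rw [mul_pow, add_comm (C a), add_comm 1, add_pow, add_pow, mul_sum, mul_sum, mul_sum, map_sum,
    map_sum]
  refine sum_congr rfl fun j hj => ?_
  obtain ⟨p, rfl⟩ := Nat.exists_eq_add_of_le (mem_range_succ_iff.1 hj)
  have hleft : f * (C a ^ (j + p) * (X ^ j * C a ^ p * (((j + p).choose j : ℕ) : R⟦X⟧))) =
      C (a ^ (j + 2 * p) * ((j + p).choose j : R)) * (f * X ^ j) := by
    simp only [map_mul, map_pow, map_natCast]
    ring
  have hright : rescale a f * (X ^ j * 1 ^ p * (((j + p).choose j : ℕ) : R⟦X⟧)) =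
      C ((j + p).choose j : R) * (rescale a f * X ^ j) := by
    simp only [map_natCast]
    ring
  rw [Nat.add_sub_cancel_left, hleft, hright, show 2 * (j + p) = j + 2 * p + j by ring,
    coeff_C_mul, coeff_C_mul, coeff_mul_X_pow, coeff_mul_X_pow, coeff_rescale]
  ring

theorem coeff_binomialSeries_eq_poch (x : ℝ) (k : ℕ) :
    coeff k (PowerSeries.binomialSeries ℝ x) = poch (x - k + 1) k / (k.factorial : ℝ) := by
  rw [binomialSeries_coeff, ringChoose_eq_poch_div_factorial, smul_eq_mul, mul_one]

theorem binomialSeries_add_natCast (x : ℝ) (k : ℕ) :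
    PowerSeries.binomialSeries ℝ (x + k) = PowerSeries.binomialSeries ℝ x * (1 + X) ^ k := by
  rw [binomialSeries_add, binomialSeries_nat]

/-- The formal power series `∑ (x-p+1)_{2p} (cX)^p / p!`; for natural `x` it is the Bessel
polynomial `y_x` evaluated at `2cX`. -/
noncomputable def besselSeries (x c : ℝ) : ℝ⟦X⟧ :=
  mk fun p => centralPoch x p * c ^ p / (p.factorial : ℝ)

theorem coeff_besselSeries (x c : ℝ) (p : ℕ) :
    coeff p (besselSeries x c) = centralPoch x p * c ^ p / (p.factorial : ℝ) :=
  coeff_mk _ _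

theorem constantCoeff_besselSeries (x c : ℝ) : constantCoeff (besselSeries x c) = 1 := by
  simp [← coeff_zero_eq_constantCoeff_apply, coeff_besselSeries, centralPoch_zero]

theorem rescale_besselSeries (a x c : ℝ) :
    rescale a (besselSeries x c) = besselSeries x (a * c) := by
  ext p
  rw [coeff_rescale, coeff_besselSeries, coeff_besselSeries, mul_pow]
  ring

theorem besselSeries_reflect (x c : ℝ) : besselSeries (-1 - x) c = besselSeries x c := by
  simp only [besselSeries, centralPoch_reflect]

theorem besselSeries_neg_one (c : ℝ) : besselSeries (-1) c = 1 := by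
  rw [← sub_zero (-1 : ℝ), besselSeries_reflect]
  ext (_ | p)
  · simp [constantCoeff_besselSeries]
  · simp [coeff_besselSeries, centralPoch_zero_succ, coeff_one]

theorem coeff_besselSeries_succ_sub (x c : ℝ) (p : ℕ) :
    coeff (p + 1) (besselSeries x c) - coeff (p + 1) (besselSeries (x - 1) c) =
      2 * c * (x - p) * coeff p (besselSeries x c) := by
  simp only [coeff_besselSeries]
  rw [← sub_div, ← sub_mul, centralPoch_succ_sub, Nat.factorial_succ]
  push_cast
  field_simp
  ring

theorem X_sq_mul_derivative_besselSeries (x c : ℝ) :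
    C (2 * c) * (X ^ 2 * d⁄dX ℝ (besselSeries x c)) =
      C (2 * c * x) * (X * besselSeries x c) - besselSeries x c + besselSeries (x - 1) c := by
  ext (_ | p)
  · simp [constantCoeff_besselSeries]
  · rw [map_add, map_sub, coeff_C_mul, coeff_C_mul, coeff_X_sq_mul_derivative, coeff_succ_X_mul]
    push_cast
    linear_combination coeff_besselSeries_succ_sub x c p

theorem X_sq_mul_derivative_besselSeries' (x c : ℝ) :
    C (2 * c) * (X ^ 2 * d⁄dX ℝ (besselSeries x c)) =
      -C (2 * c * (x + 1)) * (X * besselSeries x c) - besselSeries x c +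
        besselSeries (x + 1) c := by
  have h := X_sq_mul_derivative_besselSeries (-1 - x) c
  rw [besselSeries_reflect, show -1 - x - 1 = -1 - (x + 1) by ring, besselSeries_reflect,
    show 2 * c * (-1 - x) = -(2 * c * (x + 1)) by ring, map_neg] at h
  exact h

theorem X_sq_mul_derivative_besselSeries_triple (a x m n : ℝ) :
    C (2 * (a * (1 - a))) * (X ^ 2 * d⁄dX ℝ
        (besselSeries x (-(a * (1 - a))) * besselSeries m a * besselSeries n (1 - a))) =
      C (2 * (a * (1 - a)) * (n + m - 1 - x)) *
          (X * (besselSeries x (-(a * (1 - a))) * besselSeries m a * besselSeries n (1 - a))) +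
        C a * (besselSeries x (-(a * (1 - a))) * besselSeries m a *
          besselSeries (n - 1) (1 - a)) +
        C (1 - a) * (besselSeries x (-(a * (1 - a))) * besselSeries (m - 1) a *
          besselSeries n (1 - a)) -
        besselSeries (x + 1) (-(a * (1 - a))) * besselSeries m a * besselSeries n (1 - a) := by
  have hn := X_sq_mul_derivative_besselSeries n (1 - a)
  have hm := X_sq_mul_derivative_besselSeries m a
  have hx := X_sq_mul_derivative_besselSeries' x (-(a * (1 - a)))
  set v := besselSeries n (1 - a)
  set u := besselSeries m a
  set w := besselSeries x (-(a * (1 - a)))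
  simp only [Derivation.leibniz, smul_eq_mul]
  simp only [map_mul, map_sub, map_add, map_neg, map_one] at hn hm hx ⊢
  linear_combination C a * w * u * hn + (1 - C a) * w * v * hm - u * v * hx

/-- The coefficient of `X^N` in the product of three Bessel series of parameters
`n + m + 1 - N`, `m` and `n`; it encodes the sum of `₃F₂`'s. -/
noncomputable def besselTripleCoeff (a : ℝ) (N : ℕ) (n m : ℝ) : ℝ :=
  coeff N (besselSeries (n + m + 1 - N) (-(a * (1 - a))) * besselSeries m a *
    besselSeries n (1 - a))

/-- The coefficient of `X^(2N)` in `(1+X)^(N-1-n) (1+aX)^(n+m+1)`; it encodes the `₂F₁`. -/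
noncomputable def binomialProdCoeff (a : ℝ) (N : ℕ) (n m : ℝ) : ℝ :=
  coeff (2 * N) (PowerSeries.binomialSeries ℝ (N - 1 - n) *
    rescale a (PowerSeries.binomialSeries ℝ (n + m + 1)))

theorem besselTripleCoeff_contiguous (a : ℝ) (N : ℕ) (n m : ℝ) :
    besselTripleCoeff a N n m =
      a * besselTripleCoeff a N (n - 1) m + (1 - a) * besselTripleCoeff a N n (m - 1) := by
  have h := congrArg (coeff N) (X_sq_mul_derivative_besselSeries_triple a (n + m - N) m n)
  rw [map_sub, map_add, map_add, coeff_C_mul, coeff_C_mul, coeff_C_mul, coeff_C_mul,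
    coeff_X_sq_mul_derivative] at h
  rw [besselTripleCoeff, besselTripleCoeff, besselTripleCoeff,
    show n - 1 + m + 1 - (N : ℝ) = n + m - N by ring,
    show n + (m - 1) + 1 - (N : ℝ) = n + m - N by ring,
    show n + m + 1 - (N : ℝ) = n + m - N + 1 by ring]
  linear_combination h

theorem binomialProdCoeff_contiguous (a : ℝ) (N : ℕ) (n m : ℝ) :
    binomialProdCoeff a N n m =
      a * binomialProdCoeff a N (n - 1) m + (1 - a) * binomialProdCoeff a N n (m - 1) := by
  have h (x : ℝ) :
      PowerSeries.binomialSeries ℝ (x + 1) = PowerSeries.binomialSeries ℝ x * (1 + X) := by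
    simpa using binomialSeries_add_natCast x 1
  simp only [binomialProdCoeff]
  rw [← coeff_C_mul, ← coeff_C_mul, ← map_add,
    show (N : ℝ) - 1 - (n - 1) = (N - 1 - n) + 1 by ring,
    show n - 1 + m + 1 = n + m by ring, show n + (m - 1) + 1 = n + m by ring, h, h,
    map_mul (rescale a), map_add (rescale a), map_one (rescale a), rescale_X, map_sub, map_one]
  congr 1
  ring

theorem factorial_mul_coeff_besselSeries_mul (c d m : ℝ) (N : ℕ) :
    (N.factorial : ℝ) * coeff N (besselSeries m c * besselSeries (m - N) d) =
      ((2 * N).factorial : ℝ) *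
        coeff (2 * N) (PowerSeries.binomialSeries ℝ m * (C c * (1 + X) + C d) ^ N) := by
  rw [coeff_mul_eq_sum_range, add_pow, mul_sum, mul_sum, map_sum, mul_sum]
  refine sum_congr rfl fun q hq => ?_
  obtain ⟨l, rfl⟩ := Nat.exists_eq_add_of_le (mem_range_succ_iff.1 hq)
  have hseries : PowerSeries.binomialSeries ℝ m * ((C c * (1 + X)) ^ q * C d ^ l *
      (((q + l).choose q : ℕ) : ℝ⟦X⟧)) =
      C (c ^ q * d ^ l * ((q + l).choose q : ℝ)) * PowerSeries.binomialSeries ℝ (m + q) := by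
    rw [binomialSeries_add_natCast]
    simp only [map_mul, map_pow, map_natCast, mul_pow]
    ring
  rw [Nat.add_sub_cancel_left, hseries, coeff_C_mul, coeff_binomialSeries_eq_poch,
    coeff_besselSeries, coeff_besselSeries, Nat.cast_add_choose, ← centralPoch_mul_centralPoch]
  field_simp

theorem besselTripleCoeff_neg_one (a : ℝ) (N : ℕ) (m : ℝ) :
    (N.factorial : ℝ) * besselTripleCoeff a N (-1) m =
      ((2 * N).factorial : ℝ) * binomialProdCoeff a N (-1) m := by
  have hlin : C a * (1 + X) + C (-(a * (1 - a))) = C a * (C a + X) := by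
    simp only [map_neg, map_mul, map_sub, map_one]
    ring
  rw [besselTripleCoeff, besselSeries_neg_one, mul_one,
    show -1 + m + 1 - (N : ℝ) = m - N by ring, mul_comm (besselSeries _ _),
    factorial_mul_coeff_besselSeries_mul, hlin, coeff_mul_C_add_X_pow, binomialProdCoeff,
    show (N : ℝ) - 1 - -1 = N by ring, show -1 + m + 1 = m by ring, binomialSeries_nat,
    mul_comm (rescale a _)]

end PowerSeries

section PolynomialFunctions

/-- The real functions of the form `x ↦ P(x)` for a polynomial `P`. -/
@[fun_prop]
def IsPolyFun (f : ℝ → ℝ) : Prop := ∃ P : Polynomial ℝ, ∀ x, f x = P.eval x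

namespace IsPolyFun

variable {f g : ℝ → ℝ}

@[fun_prop]
theorem const (c : ℝ) : IsPolyFun fun _ => c := ⟨.C c, fun x => by simp⟩

@[fun_prop]
theorem id : IsPolyFun fun x => x := ⟨.X, fun x => by simp⟩

@[fun_prop]
theorem add (hf : IsPolyFun f) (hg : IsPolyFun g) : IsPolyFun fun x => f x + g x := by
  obtain ⟨P, hP⟩ := hf
  obtain ⟨Q, hQ⟩ := hg
  exact ⟨P + Q, fun x => by simp [hP, hQ]⟩

@[fun_prop]
theorem mul (hf : IsPolyFun f) (hg : IsPolyFun g) : IsPolyFun fun x => f x * g x := by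
  obtain ⟨P, hP⟩ := hf
  obtain ⟨Q, hQ⟩ := hg
  exact ⟨P * Q, fun x => by simp [hP, hQ]⟩

@[fun_prop]
theorem sub (hf : IsPolyFun f) (hg : IsPolyFun g) : IsPolyFun fun x => f x - g x := by
  obtain ⟨P, hP⟩ := hf
  obtain ⟨Q, hQ⟩ := hg
  exact ⟨P - Q, fun x => by simp [hP, hQ]⟩

@[fun_prop]
theorem div_const (hf : IsPolyFun f) (c : ℝ) : IsPolyFun fun x => f x / c := by
  simpa only [div_eq_mul_inv] using hf.mul (const c⁻¹)

@[fun_prop]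
theorem sum {ι : Type*} (s : Finset ι) {f : ι → ℝ → ℝ} (hf : ∀ i, IsPolyFun (f i)) :
    IsPolyFun fun x => ∑ i ∈ s, f i x := by
  choose P hP using hf
  exact ⟨∑ i ∈ s, P i, fun x => by simp [hP, Polynomial.eval_finsetSum]⟩

@[fun_prop]
theorem poch (hf : IsPolyFun f) (k : ℕ) : IsPolyFun fun x => poch (f x) k := by
  obtain ⟨P, hP⟩ := hf
  exact ⟨(ascPochhammer ℝ k).comp P, fun x => by simp [hP, poch_eq_eval_ascPochhammer]⟩

theorem eq_zero_of_shift (hf : IsPolyFun f) {b : ℝ} (hb : b ≠ 1)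
    (h : ∀ x, f x = b * f (x - 1)) : f = 0 := by
  obtain ⟨P, hP⟩ := hf
  have hPb : P = Polynomial.C b * Polynomial.taylor (-1) P := by
    refine Polynomial.funext fun y => ?_
    rw [Polynomial.eval_mul, Polynomial.eval_C, Polynomial.taylor_eval, ← hP, ← hP,
      ← sub_eq_add_neg, h]
  have hlead : P.leadingCoeff = b * P.leadingCoeff := by
    simpa only [Polynomial.leadingCoeff_mul, Polynomial.leadingCoeff_C,
      Polynomial.leadingCoeff_taylor] using congrArg Polynomial.leadingCoeff hPb
  have hP0 : P = 0 := by
    by_contra hne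
    exact hb (mul_right_cancel₀ (Polynomial.leadingCoeff_ne_zero.2 hne) (by linarith))
  funext x
  simp [hP, hP0]

theorem eq_zero_of_natCast (hf : IsPolyFun f) (h : ∀ i : ℕ, f i = 0) : f = 0 := by
  obtain ⟨P, hP⟩ := hf
  have hroots : Set.range (Nat.cast : ℕ → ℝ) ⊆ {x | P.IsRoot x} := by
    rintro _ ⟨i, rfl⟩
    exact (hP i).symm.trans (h i)
  have hP0 : P = 0 := P.eq_zero_of_infinite_isRoot
    ((Set.infinite_range_of_injective Nat.cast_injective).mono hroots)
  funext x
  simp [hP, hP0]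

theorem eq_zero_of_contiguous {F : ℝ → ℝ → ℝ} {a : ℝ} (ha : a ≠ 0)
    (hF₁ : ∀ m, IsPolyFun fun n => F n m) (hF₂ : ∀ n, IsPolyFun (F n))
    (hF : ∀ n m, F n m = a * F (n - 1) m + (1 - a) * F n (m - 1))
    (hF0 : ∀ m, F (-1) m = 0) (n m : ℝ) : F n m = 0 := by
  have hshift : ∀ n, F (n - 1) = 0 → F n = 0 := fun n hn =>
    (hF₂ n).eq_zero_of_shift (b := 1 - a) (by simpa using ha) fun x => by
      rw [hF, hn, Pi.zero_apply, mul_zero, zero_add]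
  have hnat : ∀ i : ℕ, F i = 0 := by
    intro i
    induction i with
    | zero => exact hshift _ (funext fun m => by simpa using hF0 m)
    | succ i ih => exact hshift _ (by simpa using ih)
  exact congrFun ((hF₁ m).eq_zero_of_natCast fun i => congrFun (hnat i) m) n

theorem besselTripleCoeff (hf : IsPolyFun f) (hg : IsPolyFun g) (a : ℝ) (N : ℕ) :
    IsPolyFun fun t => besselTripleCoeff a N (f t) (g t) := by
  simp only [_root_.besselTripleCoeff, PowerSeries.coeff_mul, coeff_besselSeries, centralPoch]
  fun_prop

theorem binomialProdCoeff (hf : IsPolyFun f) (hg : IsPolyFun g) (a : ℝ) (N : ℕ) :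
    IsPolyFun fun t => binomialProdCoeff a N (f t) (g t) := by
  simp only [_root_.binomialProdCoeff, PowerSeries.coeff_mul, PowerSeries.coeff_rescale,
    coeff_binomialSeries_eq_poch]
  fun_prop

end IsPolyFun

end PolynomialFunctions

theorem besselTripleCoeff_eq_binomialProdCoeff {a : ℝ} (ha : a ≠ 0) (N : ℕ) (n m : ℝ) :
    (N.factorial : ℝ) * besselTripleCoeff a N n m =
      ((2 * N).factorial : ℝ) * binomialProdCoeff a N n m := by
  refine sub_eq_zero.1 (IsPolyFun.eq_zero_of_contiguous ha (F := fun n m =>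
    (N.factorial : ℝ) * besselTripleCoeff a N n m -
      ((2 * N).factorial : ℝ) * binomialProdCoeff a N n m) (fun m => ?_) (fun n => ?_)
    (fun n m => ?_) (fun m => sub_eq_zero.2 (besselTripleCoeff_neg_one a N m)) n m)
  · exact ((IsPolyFun.const _).mul (.besselTripleCoeff .id (.const m) a N)).sub
      ((IsPolyFun.const _).mul (.binomialProdCoeff .id (.const m) a N))
  · exact ((IsPolyFun.const _).mul (.besselTripleCoeff (.const n) .id a N)).sub
      ((IsPolyFun.const _).mul (.binomialProdCoeff (.const n) .id a N))
  · rw [besselTripleCoeff_contiguous, binomialProdCoeff_contiguous]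
    ring

theorem regularized_3F2_eq_coeff {m : ℝ} {i : ℕ} (hm : poch (m + 1) i ≠ 0) (k b : ℝ) :
    ∑ l ∈ range (i + 1),
        poch (k + 2) l * poch (-k - 1) l * poch (-(i : ℝ)) l /
            (poch (-m - (i : ℝ)) l * (l.factorial : ℝ)) *
          poch (m - (i : ℝ) + 1 + (l : ℝ)) (2 * i - l) * b ^ l =
      (i.factorial : ℝ) *
        PowerSeries.coeff i (besselSeries (k + 1) (-b) * besselSeries m 1) := by
  rw [coeff_mul_eq_sum_range, mul_sum]
  refine sum_congr rfl fun l hl => ?_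
  obtain ⟨q, rfl⟩ := Nat.exists_eq_add_of_le (mem_range_succ_iff.1 hl)
  have hden : poch (m + 1 + q) l ≠ 0 := by
    rw [add_comm l, poch_add] at hm
    exact right_ne_zero_of_mul hm
  have hnum : poch (k + 2) l * poch (-k - 1) l = (-1) ^ l * centralPoch (k + 1) l := by
    rw [← poch_mul_poch_neg]
    ring_nf
  have hlower : poch (-m - ((l + q : ℕ) : ℝ)) l = (-1) ^ l * poch (m + 1 + q) l := by
    rw [← neg_add', poch_neg]
    push_cast
    ring_nf
  have hreg : poch (m - ((l + q : ℕ) : ℝ) + 1 + l) (2 * (l + q) - l) =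
      centralPoch m q * poch (m + 1 + q) l := by
    rw [← poch_central_add, show 2 * (l + q) - l = 2 * q + l by lia]
    push_cast
    ring_nf
  rw [Nat.add_sub_cancel_left, hnum, poch_neg_natCast_add, hlower, hreg, coeff_besselSeries,
    coeff_besselSeries, neg_pow b, one_pow]
  field_simp

theorem sum_regularized_3F2_eq_besselTripleCoeff {n m k a : ℝ} {N : ℕ} (hN : n + m = k + N)
    (hm : poch (m + 1) N ≠ 0) (ha : a ≠ 1) :
    ∑ i ∈ range (N + 1),
      a ^ i * (N.choose i : ℝ) * poch (-m + k + (i : ℝ) + 1) (2 * (N - i)) *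
        (1 - a) ^ (-(i : ℤ)) *
      ∑ l ∈ range (i + 1),
        poch (k + 2) l * poch (-k - 1) l * poch (-(i : ℝ)) l /
            (poch (-m - (i : ℝ)) l * (l.factorial : ℝ)) *
          poch (m - (i : ℝ) + 1 + (l : ℝ)) (2 * i - l) * (1 - a) ^ l =
      (1 - a) ^ (-(N : ℤ)) * ((N.factorial : ℝ) * besselTripleCoeff a N n m) := by
  have hb : 1 - a ≠ 0 := sub_ne_zero.2 ha.symm
  rw [besselTripleCoeff, show n + m + 1 - (N : ℝ) = k + 1 by rw [hN]; ring,
    coeff_mul_eq_sum_range, mul_sum, mul_sum]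
  refine sum_congr rfl fun i hi => ?_
  have hi' := mem_range_succ_iff.1 hi
  have hscale : a ^ i * PowerSeries.coeff i
        (besselSeries (k + 1) (-(1 - a)) * besselSeries m 1) =
      PowerSeries.coeff i (besselSeries (k + 1) (-(a * (1 - a))) * besselSeries m a) := by
    rw [← PowerSeries.coeff_rescale, map_mul, rescale_besselSeries, rescale_besselSeries,
      mul_neg, mul_one]
  rw [regularized_3F2_eq_coeff (poch_ne_zero_of_le hi' hm), ← hscale]
  obtain ⟨p, rfl⟩ := Nat.exists_eq_add_of_le hi'
  have hcentral : poch (-m + k + (i : ℝ) + 1) (2 * p) = centralPoch n p := by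
    rw [centralPoch]
    push_cast at hN
    congr 1
    linear_combination -hN
  rw [Nat.add_sub_cancel_left, hcentral, coeff_besselSeries n, Nat.cast_add_choose, zpow_neg,
    zpow_neg, zpow_natCast, zpow_natCast]
  field_simp [hb]
  ring

theorem sum_2F1_eq_binomialProdCoeff {n m k a : ℝ} {N : ℕ} (hN : n + m = k + N)
    (hk : poch (2 * k - n - m + 2) (2 * N) ≠ 0) (ha : a ≠ 0) :
    a ^ (2 * N) * poch (2 * k - n - m + 2) (2 * N) *
      (∑ s ∈ range (2 * N + 1),
        poch (k - m + 1) s * poch (2 * k - 2 * n - 2 * m) s /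
            (poch (2 * k - n - m + 2) s * (s.factorial : ℝ)) *
          a ^ (-(s : ℤ))) =
      ((2 * N).factorial : ℝ) * binomialProdCoeff a N n m := by
  rw [binomialProdCoeff, coeff_mul_eq_sum_range, mul_sum, mul_sum]
  refine sum_congr rfl fun s hs => ?_
  have hs' := mem_range_succ_iff.1 hs
  have hden := poch_ne_zero_of_le hs' hk
  obtain ⟨t, ht⟩ := Nat.exists_eq_add_of_le hs'
  have htc : 2 * (N : ℝ) = s + t := by exact_mod_cast ht
  have hnum : poch (k - m + 1) s = (-1) ^ s * poch ((N : ℝ) - 1 - n - s + 1) s := by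
    rw [← poch_neg]
    congr 1
    linear_combination -hN
  have hterm : poch (2 * k - 2 * n - 2 * m) s =
      (-1) ^ s * (((s + t).factorial : ℝ) / (t.factorial : ℝ)) := by
    rw [← poch_neg_natCast_add]
    push_cast
    congr 1
    linear_combination -2 * hN - htc
  have hcompl : n + m + 1 - t + 1 = 2 * k - n - m + 2 + s := by
    linear_combination 2 * hN + htc
  rw [ht, Nat.add_sub_cancel_left, PowerSeries.coeff_rescale, coeff_binomialSeries_eq_poch,
    coeff_binomialSeries_eq_poch, poch_add, hnum, hterm, hcompl, zpow_neg, zpow_natCast, pow_add]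
  field_simp
  rw [← pow_mul, mul_comm s, pow_mul, neg_one_sq, one_pow, mul_one]

theorem sum_3F2_reduction_high_general {n m k a : ℝ} {N : ℕ} (hN : n + m = k + N)
    (hm : poch (m + 1) N ≠ 0) (hk : poch (2 * k - n - m + 2) (2 * N) ≠ 0)
    (ha0 : a ≠ 0) (ha1 : a ≠ 1) :
    a ^ (2 * N) * (1 - a) ^ (-(N : ℤ)) * poch (2 * k - n - m + 2) (2 * N) *
      (∑ s ∈ range (2 * N + 1),
        poch (k - m + 1) s * poch (2 * k - 2 * n - 2 * m) s /
            (poch (2 * k - n - m + 2) s * (s.factorial : ℝ)) *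
          a ^ (-(s : ℤ))) =
    ∑ i ∈ range (N + 1),
      a ^ i * (N.choose i : ℝ) * poch (-m + k + (i : ℝ) + 1) (2 * (N - i)) *
        (1 - a) ^ (-(i : ℤ)) *
      ∑ l ∈ range (i + 1),
        poch (k + 2) l * poch (-k - 1) l * poch (-(i : ℝ)) l /
            (poch (-m - (i : ℝ)) l * (l.factorial : ℝ)) *
          poch (m - (i : ℝ) + 1 + (l : ℝ)) (2 * i - l) * (1 - a) ^ l := by
  rw [sum_regularized_3F2_eq_besselTripleCoeff hN hm ha1,
    besselTripleCoeff_eq_binomialProdCoeff ha0, ← sum_2F1_eq_binomialProdCoeff hN hk ha0]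
  ring

/-- Reduction of a sum of terminating `₃F₂`'s to a terminating `₂F₁`, in the range
`2k ≥ n+m−1`, `k ≤ n+m`: the left-hand side is
`a^{2n+2m−2k} (1−a)^{k−m−n} ((n+m+1)!/(2k+1−n−m)!) ₂F₁(−m+k+1, −2n−2m+2k; −n−m+2k+2; 1/a)`
and the inner sums on the right are the regularized terminating series
`(m−i+1)_{2i} ⬝ ₃F₂(k+2, −k−1, −i; −m−i, m−i+1; 1−a)`. -/
theorem sum_3F2_reduction_high (n m k : ℕ) (hk1 : n + m ≤ 2 * k + 1) (hk2 : k ≤ n + m)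
    (a : ℝ) (ha0 : a ≠ 0) (ha1 : a ≠ 1) :
    a ^ (2 * n + 2 * m - 2 * k) * (1 - a) ^ ((k : ℤ) - (m : ℤ) - (n : ℤ)) *
        (((n + m + 1).factorial : ℝ) / ((2 * k + 1 - n - m).factorial : ℝ)) *
      (∑ s ∈ Finset.range (2 * (n + m - k) + 1),
        poch ((k : ℝ) - (m : ℝ) + 1) s * poch (2 * (k : ℝ) - 2 * (n : ℝ) - 2 * (m : ℝ)) s /
            (poch (2 * (k : ℝ) - (n : ℝ) - (m : ℝ) + 2) s * (s.factorial : ℝ)) *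
          a ^ (-(s : ℤ))) =
    ∑ i ∈ Finset.range (m + n - k + 1),
      a ^ i * ((m + n - k).choose i : ℝ) *
        poch (-(m : ℝ) + (k : ℝ) + (i : ℝ) + 1) (2 * (m + n - k - i)) *
        (1 - a) ^ (-(i : ℤ)) *
      ∑ l ∈ Finset.range (i + 1),
        poch ((k : ℝ) + 2) l * poch (-(k : ℝ) - 1) l * poch (-(i : ℝ)) l /
            (poch (-(m : ℝ) - (i : ℝ)) l * (l.factorial : ℝ)) *
          poch ((m : ℝ) - (i : ℝ) + 1 + (l : ℝ)) (2 * i - l) * (1 - a) ^ l := by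
  obtain ⟨N, hN⟩ := Nat.exists_eq_add_of_le hk2
  obtain ⟨j, hj⟩ : ∃ j, k + 1 = j + N := ⟨k + 1 - N, by lia⟩
  have hNc : (n : ℝ) + m = k + N := by exact_mod_cast hN
  have hjc : 2 * (k : ℝ) - n - m + 2 = j + 1 := by
    have hjr : (k : ℝ) + 1 = j + N := by exact_mod_cast hj
    linear_combination hjr - hNc
  have hfact : ((n + m + 1).factorial : ℝ) / (j.factorial : ℝ) =
      poch (2 * (k : ℝ) - n - m + 2) (2 * N) := by
    rw [hjc, poch_natCast_add_one, show j + 2 * N = n + m + 1 by lia]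
  rw [show 2 * n + 2 * m - 2 * k = 2 * N by lia, show n + m - k = N by lia,
    show m + n - k = N by lia, show 2 * k + 1 - n - m = j by lia,
    show (k : ℤ) - (m : ℤ) - (n : ℤ) = -(N : ℤ) by lia, hfact]
  exact sum_3F2_reduction_high_general hNc (poch_pos (by positivity) N).ne'
    (by rw [hjc]; exact (poch_pos (by positivity) _).ne') ha0 ha1
end
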